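/- Let A be a C*-algebra and let P : A → A be a completely contractive linear idempotent (P ∘ P = P). Then for all m₁, m₂, m₃ ∈ A, Youngson's identity holds: P(P(m₁)·P(m₂)*·P(m₃)) = P(m₁·P(m₂)*·P(m₃)). -/

import Mathlib

/-!
Only the contractivity of `P` on `2 × 2` matrices is used. Put `b = P m₂`, `c = P m₃` and
`x = m₁ - P m₁`, so that `P x = 0`; the claim is that `h = P (x b* c)` vanishes.

The idea is to show that the unit ball of columns `[u; c]` over the range of `P` is nearly invariant
under the translation `u ↦ u - τ h`. Let `‖[u; c]‖ ≤ 1`, `τ = t²`, and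
`G = [[xx*/2, xb*], [0, bb*/2]]`, whose hermitian part is half of `ξξ*` with `ξ = [x; b]`.

* The matrix `M` with columns `t ξ` and `(1 - τ G) [u; c]` satisfies `‖M‖² ≤ 1 + τ² ‖G‖²`, since
  `M M* ≤ τ ξξ* + (1 - τ G)(1 - τ G)* = 1 + τ² G G*` (`norm_forward`).
* Applying `P` entrywise kills `x`: the columns of `P M` are `t β` with `β = [0; b]`, and `[u'; c']`
  with `u' = u - τ (P (xx*u) / 2 + h)` and `c' = c - τ P (bb*c) / 2`.
* As `[u'; c'][u'; c']* ≤ 1 - τ ββ* + O(τ²)`, multiplying `[u'; c']` on the left by `1 + τ ββ* / 2`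
  keeps its norm below `1 + O(τ²)` (`norm_backward`). Applying `P` once more restores the second
  entry to `c + O(τ²)` and leaves `u'` alone.

Hence `‖[u'; c]‖ ≤ 1 + O(τ²)` (`column_step`). Replacing `x, b` by `l x, b / l` does not change `h` and
makes the drift `P (xx*u)` as small as desired. Starting from `u = 0` and a small multiple of `c`,
the column could then be moved indefinitely far along the line spanned by `h` without leaving the
unit ball, which forces `h = 0` (`eq_zero_of_slow_growth`).
-/

/-- A C*-norm on a (not necessarily unital) complex `*`-algebra: a submultiplicative
norm satisfying the C*-identity `N (x* x) = N x ^ 2`. On the matrix algebra `Mₙ(A)` over a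
C*-algebra `A`, such a norm is unique and coincides with the canonical C*-norm. -/
def IsCStarNorm {B : Type*} [NonUnitalRing B] [StarRing B] [Module ℂ B] (N : B → ℝ) : Prop :=
  (∀ x, 0 ≤ N x) ∧ (∀ x, N x = 0 ↔ x = 0) ∧ (∀ x y, N (x + y) ≤ N x + N y) ∧
    (∀ (c : ℂ) (x), N (c • x) = ‖c‖ * N x) ∧ (∀ x y, N (x * y) ≤ N x * N y) ∧
    (∀ x, N (star x * x) = N x * N x)

/-- A map `P : A → A` on a C*-algebra is completely contractive if all of its entrywise
amplifications to the matrix C*-algebras `Mₙ(A)` are contractive. -/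
def CompletelyContractive {A : Type*} [NonUnitalCStarAlgebra A] (P : A → A) : Prop :=
  ∀ (n : ℕ) (N : Matrix (Fin n) (Fin n) A → ℝ), IsCStarNorm N →
    ∀ T : Matrix (Fin n) (Fin n) A, N (Matrix.of fun i j => P (T i j)) ≤ N T

/-! ### Norm estimates in C*-algebras -/

theorem norm_sq_le_of_mul_star_le {B : Type*} [CStarAlgebra B] [PartialOrder B]
    [StarOrderedRing B] {y z : B} (h : y * star y ≤ z) : ‖y‖ ^ 2 ≤ ‖z‖ := by
  rw [sq, ← CStarRing.norm_self_mul_star]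
  exact CStarAlgebra.norm_le_norm_of_nonneg_of_le (mul_star_self_nonneg y) h

/-- With `ξ ζ* = 0` encoding that `ξ` and `ζ` occupy different columns, adjoining the column `ξ` to
the contraction `ζ` is compensated up to second order by the factor `1 - G`, where
`G + G* = ξ ξ*`. -/
theorem norm_forward_unital {B : Type*} [CStarAlgebra B] [Nontrivial B] (ξ ζ G : B)
    (hξζ : ξ * star ζ = 0) (hG : G + star G = ξ * star ξ) (hζ : ‖ζ‖ ≤ 1) :
    ‖ξ + ζ - G * ζ‖ ^ 2 ≤ 1 + ‖G‖ ^ 2 := by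
  let _ := CStarAlgebra.spectralOrder B
  have _ := CStarAlgebra.spectralOrderedRing B
  have h1 : ζ * star ζ ≤ 1 := by
    have := CStarAlgebra.norm_le_one_iff_of_nonneg (ζ * star ζ) (mul_star_self_nonneg ζ)
    rw [← this, CStarRing.norm_self_mul_star]
    exact mul_le_one₀ hζ (norm_nonneg _) hζ
  have hζξ : ζ * star ξ = 0 := by simpa using congrArg star hξζ
  have h2 := star_right_conjugate_le_conjugate h1 (1 - G)
  have h3 : (ξ + ζ - G * ζ) * star (ξ + ζ - G * ζ)
      = ξ * star ξ + (1 - G) * (ζ * star ζ) * star (1 - G) := by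
    have e1 : ∀ w, ξ * (star ζ * w) = 0 := fun w => by rw [← mul_assoc, hξζ, zero_mul]
    simp only [star_sub, star_add, star_mul, star_one, mul_add, add_mul, mul_sub, sub_mul,
      mul_assoc, hξζ, hζξ, e1, mul_zero, one_mul, mul_one]
    abel
  have h4 : (ξ + ζ - G * ζ) * star (ξ + ζ - G * ζ) ≤ 1 + G * star G := by
    rw [h3]
    calc _ ≤ ξ * star ξ + (1 - G) * 1 * star (1 - G) := by gcongr
      _ = 1 + G * star G := by
        rw [← hG]
        simp only [star_sub, star_one, mul_sub, sub_mul, mul_one, one_mul]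
        abel
  calc _ ≤ ‖1 + G * star G‖ := norm_sq_le_of_mul_star_le h4
    _ ≤ ‖(1 : B)‖ + ‖G * star G‖ := norm_add_le _ _
    _ = _ := by rw [CStarRing.norm_self_mul_star, CStarRing.norm_one, sq]

/-- If `β + ζ` has norm at most `√(1 + δ)`, with `β`, `ζ` in different columns, then `ζ` has room to
be multiplied by `1 + ββ*/2`: with `q = ββ*/2`, one has `(1 + q)(1 - 2q)(1 + q) ≤ 1`. -/
theorem norm_backward_unital {B : Type*} [CStarAlgebra B] [Nontrivial B] (β ζ q : B)
    (hβζ : β * star ζ = 0) (hqq : q + q = β * star β) (δ : ℝ) (hδ : 0 ≤ δ) (h : ‖β + ζ‖ ^ 2 ≤ 1 + δ) :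
    ‖ζ + q * ζ‖ ^ 2 ≤ 1 + δ * (1 + ‖β‖ ^ 2) ^ 2 := by
  let _ := CStarAlgebra.spectralOrder B
  have _ := CStarAlgebra.spectralOrderedRing B
  have hq : q = (1 / 2 : ℝ) • (β * star β) := by rw [← hqq]; module
  have hq0 : 0 ≤ q := hq ▸ smul_nonneg (by norm_num) (mul_star_self_nonneg β)
  have hqs : star q = q := (IsSelfAdjoint.of_nonneg hq0).star_eq
  have hqn : ‖q‖ ≤ ‖β‖ ^ 2 := by
    rw [hq, norm_smul, CStarRing.norm_self_mul_star, Real.norm_of_nonneg (by norm_num)]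
    nlinarith [sq_nonneg ‖β‖]
  have hζβ : ζ * star β = 0 := by simpa using congrArg star hβζ
  have h1 : (β + ζ) * star (β + ζ) ≤ algebraMap ℝ B (1 + δ) := by
    refine CStarAlgebra.mul_star_le_algebraMap_norm_sq.trans ?_
    exact algebraMap_mono B h
  have h2 : ζ * star ζ ≤ algebraMap ℝ B (1 + δ) - (q + q) := by
    rw [le_sub_iff_add_le, hqq]
    refine le_trans (le_of_eq ?_) h1
    simp only [star_add, mul_add, add_mul, hβζ, hζβ]
    abel
  have h3 := star_right_conjugate_le_conjugate h2 (1 + q)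
  have hq3 : 0 ≤ q * q * q := by simpa [hqs] using star_right_conjugate_nonneg hq0 q
  have hq2 : 0 ≤ q * q := by simpa [hqs] using mul_star_self_nonneg q
  have h4 : (ζ + q * ζ) * star (ζ + q * ζ)
      ≤ 1 + δ • ((1 + q) * (1 + q)) := by
    have e : ζ + q * ζ = (1 + q) * ζ := by rw [add_mul, one_mul]
    rw [e, star_mul]
    calc _ = (1 + q) * (ζ * star ζ) * star (1 + q) := by simp only [mul_assoc]
      _ ≤ _ := h3
      _ = 1 + δ • ((1 + q) * (1 + q)) - (3 • (q * q) + 2 • (q * q * q)) := by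
        rw [star_add, star_one, hqs, map_add, map_one, Algebra.algebraMap_eq_smul_one]
        simp only [mul_add, add_mul, mul_sub, sub_mul, mul_one, one_mul, smul_add, mul_smul_comm,
          smul_mul_assoc]
        abel
      _ ≤ _ := sub_le_self _ (add_nonneg (nsmul_nonneg hq2 3) (nsmul_nonneg hq3 2))
  have h5 : ‖1 + q‖ ≤ 1 + ‖β‖ ^ 2 := by
    refine (norm_add_le _ _).trans ?_
    rw [CStarRing.norm_one]; gcongr
  calc _ ≤ ‖1 + δ • ((1 + q) * (1 + q))‖ := norm_sq_le_of_mul_star_le h4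
    _ ≤ ‖(1 : B)‖ + ‖δ • ((1 + q) * (1 + q))‖ := norm_add_le _ _
    _ ≤ _ := by
      rw [CStarRing.norm_one, norm_smul, Real.norm_of_nonneg hδ]
      have := norm_mul_le (1 + q) (1 + q)
      gcongr
      nlinarith [norm_nonneg (1 + q)]

/-- The estimate `norm_forward_unital` transfers through the isometric embedding in the
unitization. -/
theorem norm_forward {B : Type*} [NonUnitalCStarAlgebra B] (ξ ζ G : B)
    (hξζ : ξ * star ζ = 0) (hG : G + star G = ξ * star ξ) (hζ : ‖ζ‖ ≤ 1) :
    ‖ξ + ζ - G * ζ‖ ^ 2 ≤ 1 + ‖G‖ ^ 2 := by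
  have := norm_forward_unital (ξ : Unitization ℂ B) ζ G
    (by simp [← Unitization.inr_star, ← Unitization.inr_mul, hξζ])
    (by simp [← Unitization.inr_star, ← Unitization.inr_mul, ← Unitization.inr_add, hG])
    (by rwa [Unitization.norm_inr])
  simpa only [← Unitization.inr_star, ← Unitization.inr_mul, ← Unitization.inr_add,
    ← Unitization.inr_sub, Unitization.norm_inr] using this

theorem norm_backward {B : Type*} [NonUnitalCStarAlgebra B] (β ζ q : B)
    (hβζ : β * star ζ = 0) (hqq : q + q = β * star β) (δ : ℝ) (hδ : 0 ≤ δ) (h : ‖β + ζ‖ ^ 2 ≤ 1 + δ) :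
    ‖ζ + q * ζ‖ ^ 2 ≤ 1 + δ * (1 + ‖β‖ ^ 2) ^ 2 := by
  have := norm_backward_unital (β : Unitization ℂ B) ζ q
    (by simp [← Unitization.inr_star, ← Unitization.inr_mul, hβζ])
    (by simp [← Unitization.inr_star, ← Unitization.inr_mul, ← Unitization.inr_add, hqq])
    δ hδ (by rwa [← Unitization.inr_add, Unitization.norm_inr])
  simpa only [← Unitization.inr_star, ← Unitization.inr_mul, ← Unitization.inr_add,
    Unitization.norm_inr] using this

/-- Along a ray `z + s • v` starting inside the open unit ball, suppose that from every point of the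
closed ball a further step `τ` raises the norm above `1` by at most `ε s τ + O(τ²)`, for arbitrarily
small `ε`. By convexity of the norm the ray would never leave the ball, so `v = 0`. -/
theorem eq_zero_of_slow_growth {E : Type*} [NormedAddCommGroup E] [NormedSpace ℝ E] (z v : E)
    (hz : ‖z‖ < 1)
    (H : ∀ ε > 0, ∃ C : ℝ, ∀ s ≥ 0, ‖z + s • v‖ ≤ 1 → ∀ τ, 0 < τ → τ ≤ 1 →
      ‖z + (s + τ) • v‖ ≤ 1 + ε * s * τ + C * τ ^ 2) : v = 0 := by
  by_contra hv
  have hv' : 0 < ‖v‖ := norm_pos_iff.mpr hv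
  let S : Set ℝ := {s | 0 ≤ s ∧ ‖z + s • v‖ ≤ 1}
  have hS0 : (0 : ℝ) ∈ S := ⟨le_rfl, by simpa using hz.le⟩
  have hSb : BddAbove S := by
    refine ⟨2 / ‖v‖, fun s hs => ?_⟩
    rw [le_div_iff₀ hv']
    have h1 : ‖s • v‖ ≤ ‖z + s • v‖ + ‖z‖ := by
      simpa using norm_sub_le (z + s • v) z
    rw [norm_smul, Real.norm_of_nonneg hs.1] at h1
    linarith [hs.2]
  have hSc : IsClosed S := by
    have hc : Continuous fun s : ℝ => ‖z + s • v‖ := by fun_prop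
    exact (isClosed_le continuous_const continuous_id).inter (isClosed_le hc continuous_const)
  obtain ⟨hs0, hs1⟩ : sSup S ∈ S := hSc.csSup_mem ⟨0, hS0⟩ hSb
  have hmax : ∀ t ∈ S, t ≤ sSup S := fun t ht => le_csSup hSb ht
  -- `s` is the last parameter at which the ray lies in the closed unit ball.
  generalize sSup S = s at hs0 hs1 hmax
  set g := 1 - ‖z‖ with hg
  have hg0 : 0 < g := by linarith
  obtain ⟨C, hC⟩ := H (g / (8 * (s + 1) ^ 2)) (by positivity)
  obtain ⟨τ, hτ0, hτ1, hτC⟩ : ∃ τ : ℝ, 0 < τ ∧ τ ≤ 1 ∧ |C| * (s + 1) * τ ≤ g / 8 := by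
    refine ⟨min 1 (g / (8 * ((|C| + 1) * (s + 1)))), by positivity, min_le_left _ _, ?_⟩
    calc |C| * (s + 1) * min 1 (g / (8 * ((|C| + 1) * (s + 1))))
        ≤ (|C| + 1) * (s + 1) * (g / (8 * ((|C| + 1) * (s + 1)))) := by
          gcongr
          · linarith
          · exact min_le_right _ _
      _ = g / 8 := by field_simp
  have h1 := hC s hs0 hs1 τ hτ0 hτ1
  have hE : g / (8 * (s + 1) ^ 2) * s * τ + C * τ ^ 2 ≤ g * τ / (4 * (s + 1)) := by
    have a1 : g / (8 * (s + 1) ^ 2) * s * τ ≤ g * τ / (8 * (s + 1)) := by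
      rw [div_mul_eq_mul_div, div_mul_eq_mul_div, div_le_div_iff₀ (by positivity) (by positivity)]
      have : 0 ≤ g * τ * (s + 1) := by positivity
      nlinarith
    have a2 : C * τ ^ 2 ≤ g * τ / (8 * (s + 1)) := by
      rw [le_div_iff₀ (by positivity)]
      have : C * τ ^ 2 * (8 * (s + 1)) ≤ |C| * τ ^ 2 * (8 * (s + 1)) := by
        gcongr; exact le_abs_self C
      nlinarith
    have : g * τ / (4 * (s + 1)) = g * τ / (8 * (s + 1)) + g * τ / (8 * (s + 1)) := by
      field_simp; norm_num
    linarith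
  -- `s + τ / 2 = θ (s + τ)` is a convex combination of `0`, where the norm is `1 - g`, and `s + τ`,
  -- where it exceeds `1` only slightly; so the ball still contains the point at `s + τ / 2`.
  obtain ⟨θ, hθ⟩ : ∃ θ : ℝ, θ = (s + τ / 2) / (s + τ) := ⟨_, rfl⟩
  have hθ0 : 0 ≤ θ := by rw [hθ]; positivity
  have hsτ : 0 < s + τ := by positivity
  have hθe : θ * (s + τ) = s + τ / 2 := by rw [hθ]; field_simp
  have hθ1 : 1 - θ = τ / 2 / (s + τ) := by rw [hθ]; field_simp; ring
  have hθ1' : 0 ≤ 1 - θ := by rw [hθ1]; positivity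
  have h2 : z + (s + τ / 2) • v = (1 - θ) • z + θ • (z + (s + τ) • v) := by
    rw [← hθe, mul_smul]; module
  have h3 : ‖z + (s + τ / 2) • v‖ ≤ (1 - θ) * ‖z‖ + θ * (1 + g * τ / (4 * (s + 1))) := by
    rw [h2]
    refine (norm_add_le _ _).trans ?_
    rw [norm_smul, norm_smul, Real.norm_of_nonneg hθ1', Real.norm_of_nonneg hθ0]
    gcongr
    linarith
  have h4 : θ * (g * τ / (4 * (s + 1))) ≤ (1 - θ) * g := by
    have : (1 - θ) * g = g * τ / (2 * (s + τ)) := by rw [hθ1]; field_simp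
    have b1 : g * τ / (4 * (s + 1)) ≤ g * τ / (2 * (s + τ)) := by
      refine div_le_div_of_nonneg_left (by positivity) (by positivity) (by linarith)
    have b0 : 0 ≤ g * τ / (4 * (s + 1)) := by positivity
    nlinarith
  have h5 : s + τ / 2 ∈ S := ⟨by positivity, by nlinarith⟩
  linarith [hmax _ h5]

/-! ### Matrices of size two -/

/-- The `2 × 2` matrix `[[a, b], [c, d]]` as an element of the C*-algebra `M₂(A)`. A column
`[u; c]` is encoded as `mat2 0 u 0 c`. -/
def mat2 {A : Type*} (a b c d : A) : CStarMatrix (Fin 2) (Fin 2) A :=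
  CStarMatrix.ofMatrix !![a, b; c, d]

section
variable {A : Type*} [NonUnitalCStarAlgebra A]

theorem mat2_mul (a b c d a' b' c' d' : A) :
    mat2 a b c d * mat2 a' b' c' d' =
      mat2 (a * a' + b * c') (a * b' + b * d') (c * a' + d * c') (c * b' + d * d') := by
  ext i j
  fin_cases i <;> fin_cases j <;> simp [mat2, CStarMatrix.mul_apply, Fin.sum_univ_two]

theorem mat2_add (a b c d a' b' c' d' : A) :
    mat2 a b c d + mat2 a' b' c' d' = mat2 (a + a') (b + b') (c + c') (d + d') := by
  ext i j
  fin_cases i <;> fin_cases j <;> simp [mat2]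

theorem mat2_sub (a b c d a' b' c' d' : A) :
    mat2 a b c d - mat2 a' b' c' d' = mat2 (a - a') (b - b') (c - c') (d - d') := by
  ext i j
  fin_cases i <;> fin_cases j <;> simp [mat2]

theorem mat2_smul (r : ℝ) (a b c d : A) :
    r • mat2 a b c d = mat2 (r • a) (r • b) (r • c) (r • d) := by
  ext i j
  fin_cases i <;> fin_cases j <;> simp [mat2]

theorem mat2_star (a b c d : A) :
    star (mat2 a b c d) = mat2 (star a) (star c) (star b) (star d) := by
  ext i j
  fin_cases i <;> fin_cases j <;> simp [mat2, CStarMatrix.star_apply]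

theorem mat2_zero : mat2 (0 : A) 0 0 0 = 0 := by
  ext i j
  fin_cases i <;> fin_cases j <;> simp [mat2]

/-- The real normed space structure on `M₂(A)` whose scalar multiplication is the entrywise one,
rather than the one obtained by restricting complex scalars on `M₂(A)`. -/
noncomputable local instance [PartialOrder A] [StarOrderedRing A] :
    NormedSpace ℝ (CStarMatrix (Fin 2) (Fin 2) A) where
  __ := (CStarMatrix.instModule : Module ℝ (CStarMatrix (Fin 2) (Fin 2) A))
  norm_smul_le r M := by
    have h : r • M = (r : ℂ) • M := by
      ext i j
      exact (Complex.coe_smul r (M i j)).symm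
    rw [h, norm_smul, Complex.norm_real]

/-! ### Moving columns over the range of the projection -/

theorem le_one_add_of_sq_le {a e : ℝ} (ha : 0 ≤ a) (he : 0 ≤ e) (h : a ^ 2 ≤ 1 + e) :
    a ≤ 1 + e := by
  nlinarith

/-- Columns `[u; c]` of norm at most `1` over the range of `P` can be translated in the direction
`-(P (x x* u) / 2 + P (x b* c))` by `τ` with only a second order increase of the norm, uniformly in
`u`. -/
theorem column_step [PartialOrder A] [StarOrderedRing A] (P : A →ₗ[ℂ] A)
    (hPP : ∀ y, P (P y) = P y)
    (hP : ∀ a b c d, ‖mat2 (P a) (P b) (P c) (P d)‖ ≤ ‖mat2 a b c d‖)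
    {x b c : A} (hx : P x = 0) (hb : P b = b) (hc : P c = c) :
    ∃ C : ℝ, ∀ u : A, P u = u → ‖mat2 0 u 0 c‖ ≤ 1 → ∀ τ : ℝ, 0 < τ → τ ≤ 1 →
      ‖mat2 0 (u - τ • ((1 / 2 : ℝ) • P (x * star x * u) + P (x * star b * c))) 0 c‖
        ≤ 1 + C * τ ^ 2 := by
  set G₁ := mat2 ((1 / 2 : ℝ) • (x * star x)) (x * star b) 0 ((1 / 2 : ℝ) • (b * star b)) with hG₁
  set β₁ := mat2 0 0 b 0 with hβ₁
  set D := mat2 0 0 0 ((1 / 4 : ℝ) • P (b * star b * P (b * star b * c))) with hD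
  have hPr : ∀ (r : ℝ) (a : A), P (r • a) = r • P a := fun r a => P.map_smul_of_tower r a
  refine ⟨‖G₁‖ ^ 2 * (1 + ‖β₁‖ ^ 2) ^ 2 + ‖D‖, fun u hu hζ τ hτ0 hτ1 => ?_⟩
  obtain ⟨t, ht0, ht⟩ : ∃ t : ℝ, 0 ≤ t ∧ t * t = τ :=
    ⟨√τ, Real.sqrt_nonneg _, Real.mul_self_sqrt hτ0.le⟩
  set u' := u - τ • ((1 / 2 : ℝ) • P (x * star x * u) + P (x * star b * c)) with hu'
  set c' := c - τ • (1 / 2 : ℝ) • P (b * star b * c) with hc'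
  have h1 := norm_forward (t • mat2 x 0 b 0) (mat2 0 u 0 c) (τ • G₁)
    (by simp [mat2_star, mat2_mul, mat2_zero])
    (by
      have e : (1 / 2 : ℝ) + 1 / 2 = 1 := by norm_num
      simp only [hG₁, mat2_star, mat2_mul, mat2_smul, mat2_add, star_smul, star_mul, star_star,
        star_zero, star_trivial, mul_zero, add_zero, zero_add, smul_mul_assoc, mul_smul_comm,
        smul_zero, smul_smul, ht, ← add_smul, ← mul_add, e, mul_one]) hζ
  -- the matrix `M`, and then its image under `P`
  have h2 : t • mat2 x 0 b 0 + mat2 0 u 0 c - τ • G₁ * mat2 0 u 0 c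
      = mat2 (t • x) (u - τ • ((1 / 2 : ℝ) • (x * star x * u) + x * star b * c)) (t • b)
        (c - τ • (1 / 2 : ℝ) • (b * star b * c)) := by
    simp only [hG₁, mat2_mul, mat2_smul, mat2_add, mat2_sub, smul_mul_assoc,
      smul_zero, mul_zero, zero_mul, add_zero, zero_add, sub_zero, smul_add]
  have h3 : ‖t • β₁ + mat2 0 u' 0 c'‖
      ≤ ‖t • mat2 x 0 b 0 + mat2 0 u 0 c - τ • G₁ * mat2 0 u 0 c‖ := by
    rw [h2]
    refine le_trans (le_of_eq ?_) (hP _ _ _ _)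
    simp only [hβ₁, mat2_smul, mat2_add, map_sub, map_add, hPr, hx, hb, hc, hu, hu', hc', smul_zero,
      add_zero, zero_add]
  have h4 : ‖t • β₁ + mat2 0 u' 0 c'‖ ^ 2 ≤ 1 + ‖τ • G₁‖ ^ 2 := by
    refine le_trans ?_ h1
    gcongr
  have h5 := norm_backward (t • β₁) (mat2 0 u' 0 c')
    (mat2 0 0 0 (τ • (1 / 2 : ℝ) • (b * star b)))
    (by simp [hβ₁, mat2_smul, mat2_star, mat2_mul, mat2_zero])
    (by
      simp only [hβ₁, mat2_smul, mat2_add, mat2_star, mat2_mul, star_smul, star_zero, star_trivial,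
        smul_mul_assoc, mul_smul_comm, smul_zero, mul_zero, zero_mul, add_zero, smul_smul, ht]
      congr 1
      module) _ (by positivity) h4
  have h6 : mat2 0 u' 0 c' + mat2 0 0 0 (τ • (1 / 2 : ℝ) • (b * star b)) * mat2 0 u' 0 c'
      = mat2 0 u' 0 (c' + τ • (1 / 2 : ℝ) • (b * star b * c')) := by
    simp only [mat2_mul, mat2_add, smul_mul_assoc, mul_zero, zero_mul, add_zero, zero_add]
  -- A second application of `P` restores `c`, up to the second order term `D`.
  have h7 : mat2 0 u' 0 c = mat2 (P 0) (P u') (P 0) (P (c' + τ • (1 / 2 : ℝ) • (b * star b * c')))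
      + τ ^ 2 • D := by
    have e1 : P u' = u' := by simp only [hu', map_sub, map_add, hPr, hPP, hu]
    have e2 : P (c' + τ • (1 / 2 : ℝ) • (b * star b * c'))
        + τ ^ 2 • (1 / 4 : ℝ) • P (b * star b * P (b * star b * c)) = c := by
      simp only [hc', map_sub, map_add, hPr, hPP, hc, mul_sub, mul_smul_comm]
      module
    simp only [hD, mat2_smul, mat2_add, map_zero, smul_zero, add_zero, e1, e2]
  rw [h6] at h5
  have h8 := hP 0 u' 0 (c' + τ • (1 / 2 : ℝ) • (b * star b * c'))
  set X := ‖mat2 0 u' 0 (c' + τ • (1 / 2 : ℝ) • (b * star b * c'))‖ with hX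
  have hX0 : 0 ≤ X := norm_nonneg _
  have h9 : X ^ 2 ≤ 1 + τ ^ 2 * (‖G₁‖ ^ 2 * (1 + ‖β₁‖ ^ 2) ^ 2) := by
    refine h5.trans ?_
    rw [norm_smul, norm_smul, Real.norm_of_nonneg ht0, Real.norm_of_nonneg hτ0.le, mul_pow, mul_pow,
      sq t, ht, mul_assoc]
    gcongr
    exact mul_le_of_le_one_left (by positivity) hτ1
  have h10 : X ≤ 1 + τ ^ 2 * (‖G₁‖ ^ 2 * (1 + ‖β₁‖ ^ 2) ^ 2) :=
    le_one_add_of_sq_le hX0 (by positivity) h9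
  rw [h7]
  refine (norm_add_le _ _).trans ?_
  rw [norm_smul, Real.norm_of_nonneg (by positivity)]
  calc _ ≤ (1 + τ ^ 2 * (‖G₁‖ ^ 2 * (1 + ‖β₁‖ ^ 2) ^ 2)) + τ ^ 2 * ‖D‖ := by
        gcongr
        exact h8.trans h10
    _ = _ := by ring

/-- The kernel form of Youngson's identity. -/
theorem apply_mul_star_mul_eq_zero [PartialOrder A] [StarOrderedRing A] (P : A →ₗ[ℂ] A)
    (hPP : ∀ y, P (P y) = P y)
    (hP : ∀ a b c d, ‖mat2 (P a) (P b) (P c) (P d)‖ ≤ ‖mat2 a b c d‖)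
    {x b c : A} (hx : P x = 0) (hb : P b = b) (hc : P c = c) : P (x * star b * c) = 0 := by
  have hPr : ∀ (r : ℝ) (a : A), P (r • a) = r • P a := fun r a => P.map_smul_of_tower r a
  -- By homogeneity, `c` may be taken of norm less than one.
  wlog hc1 : ‖mat2 0 0 0 c‖ < 1 generalizing c
  · obtain ⟨r, hr0, hr⟩ : ∃ r : ℝ, 0 < r ∧ r * ‖mat2 0 0 0 c‖ < 1 := by
      refine ⟨(‖mat2 0 0 0 c‖ + 1)⁻¹, by positivity, ?_⟩
      rw [inv_mul_lt_one₀ (by positivity)]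
      linarith
    have h := this (c := r • c) (by rw [hPr, hc]) (by
      have : mat2 0 0 0 (r • c) = r • mat2 0 0 0 c := by simp [mat2_smul]
      rwa [this, norm_smul, Real.norm_of_nonneg hr0.le])
    rw [mul_smul_comm, hPr] at h
    exact (smul_eq_zero.mp h).resolve_left hr0.ne'
  set h := P (x * star b * c) with hh
  have key : mat2 0 (-h) 0 0 = 0 := by
    refine eq_zero_of_slow_growth (mat2 0 0 0 c) _ hc1 fun ε hε => ?_
    set K := ‖mat2 0 ((1 / 2 : ℝ) • P (x * star x * h)) 0 0‖ with hK
    -- Replacing `x, b` by `l x, b / l` fixes `h` and scales the drift `P (x x* h)` by `l²`.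
    obtain ⟨l, hl0, hl⟩ : ∃ l : ℝ, 0 < l ∧ l ^ 2 * K ≤ ε := by
      refine ⟨√(ε / (K + 1)), by positivity, ?_⟩
      rw [Real.sq_sqrt (by positivity), div_mul_eq_mul_div, div_le_iff₀ (by positivity)]
      nlinarith
    obtain ⟨C, hC⟩ := column_step P hPP hP (x := l • x) (b := l⁻¹ • b) (c := c)
      (by rw [hPr, hx, smul_zero]) (by rw [hPr, hb]) hc
    refine ⟨C, fun s hs hsn τ hτ0 hτ1 => ?_⟩
    have e0 : mat2 0 0 0 c + s • mat2 0 (-h) 0 0 = mat2 0 (-(s • h)) 0 c := by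
      simp [mat2_smul, mat2_add]
    rw [e0] at hsn
    have h1 := hC (-(s • h)) (by rw [map_neg, hPr, hh, hPP]) hsn τ hτ0 hτ1
    have e1 : mat2 0 0 0 c + (s + τ) • mat2 0 (-h) 0 0
        = mat2 0 (-(s • h) - τ • ((1 / 2 : ℝ) • P (l • x * star (l • x) * -(s • h))
            + P (l • x * star (l⁻¹ • b) * c))) 0 c
          - (τ * s * l ^ 2) • mat2 0 ((1 / 2 : ℝ) • P (x * star x * h)) 0 0 := by
      have e2 : P (l • x * star (l⁻¹ • b) * c) = h := by
        rw [star_smul, star_trivial, smul_mul_assoc, mul_smul_comm, smul_smul,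
          mul_inv_cancel₀ hl0.ne', one_smul]
      have e3 : P (l • x * star (l • x) * -(s • h)) = -((l ^ 2 * s) • P (x * star x * h)) := by
        rw [star_smul, star_trivial, smul_mul_assoc, mul_smul_comm, smul_smul, mul_neg, map_neg,
          smul_mul_assoc, mul_smul_comm, smul_smul, hPr, sq]
      rw [e2, e3]
      simp only [mat2_smul, mat2_add, mat2_sub, smul_zero, add_zero, zero_add, sub_zero]
      congr 1
      module
    rw [e1]
    refine (norm_sub_le _ _).trans ?_
    rw [norm_smul, Real.norm_of_nonneg (by positivity), ← hK]
    have : τ * s * l ^ 2 * K ≤ ε * s * τ := by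
      have : 0 ≤ τ * s := by positivity
      nlinarith
    linarith
  have := congrFun (congrFun key 0) 1
  simpa [mat2] using this
end

/-! ### The identity -/

theorem isCStarNorm_cstarMatrix {A : Type*} [NonUnitalCStarAlgebra A] [PartialOrder A]
    [StarOrderedRing A] (n : ℕ) :
    IsCStarNorm fun T : Matrix (Fin n) (Fin n) A => ‖CStarMatrix.ofMatrix T‖ :=
  ⟨fun _ => norm_nonneg _, fun _ => norm_eq_zero (E := CStarMatrix (Fin n) (Fin n) A),
    fun x y => norm_add_le (CStarMatrix.ofMatrix x) (CStarMatrix.ofMatrix y),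
    fun c x => norm_smul c (CStarMatrix.ofMatrix x),
    fun x y => norm_mul_le (CStarMatrix.ofMatrix x) (CStarMatrix.ofMatrix y),
    fun x => CStarRing.norm_star_mul_self (x := CStarMatrix.ofMatrix x)⟩

/-- **Youngson's identity** for a completely contractive idempotent on a C*-algebra. -/
theorem youngson_identity {A : Type*} [NonUnitalCStarAlgebra A]
    (P : A →ₗ[ℂ] A) (hidem : P ∘ₗ P = P) (hcc : CompletelyContractive (P : A → A))
    (m₁ m₂ m₃ : A) :
    P (P m₁ * star (P m₂) * P m₃) = P (m₁ * star (P m₂) * P m₃) := by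
  let _ := CStarAlgebra.spectralOrder A
  have _ := CStarAlgebra.spectralOrderedRing A
  have hPP : ∀ y, P (P y) = P y := fun y => LinearMap.congr_fun hidem y
  have hP : ∀ a b c d, ‖mat2 (P a) (P b) (P c) (P d)‖ ≤ ‖mat2 a b c d‖ := fun a b c d => by
    have h := hcc 2 _ (isCStarNorm_cstarMatrix 2) !![a, b; c, d]
    have e : (Matrix.of fun i j => P (!![a, b; c, d] i j)) = !![P a, P b; P c, P d] := by
      ext i j
      fin_cases i <;> fin_cases j <;> rfl
    rwa [e] at h
  have h := apply_mul_star_mul_eq_zero P hPP hP (x := m₁ - P m₁) (b := P m₂) (c := P m₃)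
    (by rw [map_sub, hPP, sub_self]) (hPP _) (hPP _)
  rw [sub_mul, sub_mul, map_sub, sub_eq_zero] at h
  exact h.symm
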